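/- Let W:𝔻̄→ℂ≅ℝ² be a C¹ vector field that is divergence free, tangent to the unit circle (Re(W(z)·z̄)=0 for all |z|=1), and vanishes only at the origin. Let ψ denote the flow of ∂_tψ(t,z)=W(ψ(t,z)), ψ(0,z)=z. Then: (1) for every z∈𝔻̄∖{0} the trajectory t↦ψ(t,z) is defined for all t∈ℝ and is periodic, and its orbit is a closed curve contained in 𝔻̄ enclosing a simply connected region containing the origin; (2) the maps ψ(t,·), t∈ℝ, form a one-parameter group of diffeomorphisms of the closed unit disc; (3) if in addition conj(W(z))=−W(z̄) for all z∈𝔻̄, then every orbit is symmetric with respect to the real axis; (4) if W(e^{iθ₀}z)=e^{iθ₀}W(z) for all z∈𝔻̄ and some θ₀∈ℝ, then every orbit is invariant under the rotation z↦e^{iθ₀}z. -/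

import Mathlib

open MeasureTheory Metric Set

/-- Global flow of a bounded Lipschitz field. -/
theorem aux_local_sol {E : Type*} [NormedAddCommGroup E] [NormedSpace ℝ E] [CompleteSpace E]
    (F : E → E) (K M : NNReal) (hF : LipschitzWith K F) (hM : ∀ z, ‖F z‖ ≤ M) (z : E) (n : ℕ) :
    ∃ γ : ℝ → E, γ 0 = z ∧ ∀ t ∈ Ioo (-(n:ℝ) - 1) (n + 1), HasDerivAt γ (F (γ t)) t := by
  have h0 : (0:ℝ) ∈ Icc (-(n:ℝ) - 1) (n + 1) := ⟨by linarith [n.cast_nonneg (α := ℝ)], by positivity⟩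
  have hPL : IsPicardLindelof (fun _ : ℝ => F) (tmin := -(n:ℝ) - 1) (tmax := n + 1) ⟨0, h0⟩ z
      (M * (n + 1)) 0 M K := by
    apply IsPicardLindelof.of_time_independent
    · intro x _; exact hM x
    · exact hF.lipschitzOnWith
    · have : max ((n:ℝ) + 1 - 0) (0 - (-(n:ℝ) - 1)) = n + 1 := by
        rw [max_eq_left] <;> linarith
      simp only [this]
      push_cast
      simp
  obtain ⟨γ, h1, h2⟩ := hPL.exists_eq_forall_mem_Icc_hasDerivWithinAt₀
  refine ⟨γ, h1, fun t ht => (h2 t ⟨ht.1.le, ht.2.le⟩).hasDerivAt (Icc_mem_nhds ht.1 ht.2)⟩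

theorem aux_flow {E : Type*} [NormedAddCommGroup E] [NormedSpace ℝ E] [CompleteSpace E]
    (F : E → E) (K M : NNReal) (hF : LipschitzWith K F) (hM : ∀ z, ‖F z‖ ≤ M) :
    ∃ φ : ℝ → E → E, (∀ z, φ 0 z = z) ∧ (∀ z t, HasDerivAt (fun s => φ s z) (F (φ t z)) t) ∧
      (∀ s t z, φ (s + t) z = φ s (φ t z)) ∧ Continuous (fun p : ℝ × E => φ p.1 p.2) ∧
      (∀ t, 0 ≤ t → ∀ z w, dist (φ t z) (φ t w) ≤ dist z w * Real.exp (K * t)) ∧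
      (∀ z, F z = 0 → ∀ t, φ t z = z) ∧
      (∀ t, 0 ≤ t → ∀ z w, dist (φ (-t) z) (φ (-t) w) ≤ dist z w * Real.exp (K * t)) := by
  choose γ hγ0 hγ using aux_local_sol F K M hF hM
  have hcoh : ∀ z (m n : ℕ), m ≤ n → ∀ t ∈ Ioo (-(m:ℝ) - 1) (m + 1), γ z m t = γ z n t := by
    intro z m n hmn t ht
    have hmn' : (m:ℝ) ≤ n := by exact_mod_cast hmn
    have h0 : (0:ℝ) ∈ Ioo (-(m:ℝ) - 1) (m + 1) :=
      ⟨by linarith [m.cast_nonneg (α := ℝ)], by positivity⟩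
    exact ODE_solution_unique_of_mem_Ioo (v := fun _ => F) (s := fun _ => univ) (K := K)
      (fun t _ => hF.lipschitzOnWith) h0
      (fun t ht => ⟨hγ z m t ht, mem_univ _⟩)
      (fun t ht => ⟨hγ z n t ⟨by linarith [ht.1], by linarith [ht.2]⟩, mem_univ _⟩)
      (by rw [hγ0, hγ0]) ht
  let φ : ℝ → E → E := fun t z => γ z (Nat.ceil |t|) t
  have hφeq : ∀ z (n : ℕ) t, t ∈ Ioo (-(n:ℝ) - 1) (n + 1) → φ t z = γ z n t := by
    intro z n t ht
    have htc := Nat.le_ceil |t|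
    have hh := abs_le.1 htc
    have htm : t ∈ Ioo (-((Nat.ceil |t| : ℕ):ℝ) - 1) ((Nat.ceil |t| : ℕ) + 1) :=
      ⟨by linarith, by linarith⟩
    rcases le_total (Nat.ceil |t|) n with h | h
    · exact hcoh z _ _ h t htm
    · exact (hcoh z _ _ h t ht).symm
  have hd : ∀ z t, HasDerivAt (fun s => φ s z) (F (φ t z)) t := by
    intro z t
    set n := Nat.ceil |t|
    have htc := Nat.le_ceil |t|
    have hh := abs_le.1 htc
    have htm : t ∈ Ioo (-(n:ℝ) - 1) (n + 1) := ⟨by linarith, by linarith⟩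
    have := hγ z n t htm
    rw [hφeq z n t htm]
    refine this.congr_of_eventuallyEq ?_
    filter_upwards [Ioo_mem_nhds htm.1 htm.2] with s hs
    exact hφeq z n s hs
  have h0 : ∀ z, φ 0 z = z := fun z => hγ0 z _
  have hgr : ∀ s t z, φ (s + t) z = φ s (φ t z) := by
    intro s t z
    have := ODE_solution_unique_univ (v := fun _ => F) (s := fun _ => univ) (K := K)
      (f := fun s => φ (s + t) z) (g := fun s => φ s (φ t z)) (t₀ := 0)
      (fun t => hF.lipschitzOnWith)
      (fun s => ⟨by simpa using (hd z (s + t)).comp_add_const s t, mem_univ _⟩)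
      (fun s => ⟨hd _ s, mem_univ _⟩) (by simp [h0])
    exact congrFun this s
  have hlip : ∀ t, 0 ≤ t → ∀ z w, dist (φ t z) (φ t w) ≤ dist z w * Real.exp (K * t) := by
    intro t ht z w
    have := dist_le_of_trajectories_ODE (v := fun _ => F) (K := K) (a := 0) (b := t)
      (f := fun s => φ s z) (g := fun s => φ s w) (δ := dist z w)
      (fun _ => hF) (fun s _ => (hd z s).continuousAt.continuousWithinAt)
      (fun s _ => (hd z s).hasDerivWithinAt)
      (fun s _ => (hd w s).continuousAt.continuousWithinAt)
      (fun s _ => (hd w s).hasDerivWithinAt) (by simp [h0]) t ⟨ht, le_rfl⟩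
    simpa using this
  have hstat : ∀ z, F z = 0 → ∀ t, φ t z = z := by
    intro z hz t
    have := ODE_solution_unique_univ (v := fun _ => F) (s := fun _ => univ) (K := K)
      (f := fun s => φ s z) (g := fun _ => z) (t₀ := 0)
      (fun t => hF.lipschitzOnWith)
      (fun s => ⟨hd z s, mem_univ _⟩)
      (fun s => ⟨by simpa [hz] using hasDerivAt_const s z, mem_univ _⟩) (by simp [h0])
    exact congrFun this t
  have hd' : ∀ z t, HasDerivAt (fun s => φ (-s) z) (-F (φ (-t) z)) t := by
    intro z t
    simpa [Function.comp_def] using (hd z (-t)).scomp t (hasDerivAt_neg t)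
  have hb : ∀ t, 0 ≤ t → ∀ z w, dist (φ (-t) z) (φ (-t) w) ≤ dist z w * Real.exp (K * t) := by
    intro t ht z w
    have := dist_le_of_trajectories_ODE (v := fun _ => fun x => - F x) (K := K) (a := 0) (b := t)
      (f := fun s => φ (-s) z) (g := fun s => φ (-s) w) (δ := dist z w)
      (fun _ => hF.neg) (fun s _ => (hd' z s).continuousAt.continuousWithinAt)
      (fun s _ => (hd' z s).hasDerivWithinAt)
      (fun s _ => (hd' w s).continuousAt.continuousWithinAt)
      (fun s _ => (hd' w s).hasDerivWithinAt) (by simp [h0]) t ⟨ht, le_rfl⟩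
    simpa using this
  refine ⟨φ, h0, hd, hgr, ?_, hlip, hstat, hb⟩
  -- joint continuity
  have htime : ∀ z s t, dist (φ s z) (φ t z) ≤ M * dist s t := by
    intro z s t
    have : LipschitzWith M (fun s => φ s z) := by
      apply lipschitzWith_of_nnnorm_deriv_le (𝕜 := ℝ) (fun s => (hd z s).differentiableAt)
      intro s
      rw [(hd z s).deriv]
      exact hM _
    exact this.dist_le_mul s t
  rw [continuous_iff_continuousAt]
  rintro ⟨t0, z0⟩
  -- write t = (t0 - 1) + (t - t0 + 1)
  have key : ∀ t, t0 - 1 ≤ t → ∀ z, dist (φ t z) (φ t0 z0) ≤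
      dist (φ (t0-1) z) (φ (t0-1) z0) * Real.exp (K * (t - t0 + 1)) + M * dist t t0 := by
    intro t ht z
    have h1 := hlip (t - t0 + 1) (by linarith) (φ (t0-1) z) (φ (t0-1) z0)
    rw [← hgr, ← hgr, show t - t0 + 1 + (t0 - 1) = t by ring] at h1
    exact (dist_triangle _ (φ t z0) _).trans (add_le_add h1 (htime _ _ _))
  have hlip' : Continuous (φ (t0 - 1)) := by
    -- use inverse time flow estimate
    have hC : ∃ C : ℝ, 0 ≤ C ∧ ∀ z w, dist (φ (t0-1) z) (φ (t0-1) w) ≤ C * dist z w := by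
      rcases le_total 0 (t0 - 1) with h | h
      · exact ⟨_, (Real.exp_pos _).le, fun z w => by rw [mul_comm]; exact hlip _ h z w⟩
      · refine ⟨_, (Real.exp_pos _).le, fun z w => by
          rw [mul_comm]; simpa using hb (-(t0 - 1)) (by linarith) z w⟩
    obtain ⟨C, hC0, hC⟩ := hC
    exact (LipschitzWith.of_dist_le_mul (K := ⟨C, hC0⟩) hC).continuous
  rw [ContinuousAt, tendsto_iff_dist_tendsto_zero]
  have hlim : Filter.Tendsto (fun p : ℝ × E =>
      dist (φ (t0-1) p.2) (φ (t0-1) z0) * Real.exp (K * (p.1 - t0 + 1)) + M * dist p.1 t0)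
      (nhds (t0, z0)) (nhds 0) := by
    have : Continuous (fun p : ℝ × E =>
      dist (φ (t0-1) p.2) (φ (t0-1) z0) * Real.exp (K * (p.1 - t0 + 1)) + M * dist p.1 t0) := by
      have := hlip'.comp (continuous_snd (X := ℝ) (Y := E))
      simp only [Function.comp_def] at this
      fun_prop
    simpa using this.tendsto (t0, z0)
  refine squeeze_zero' (Filter.Eventually.of_forall fun _ => dist_nonneg) ?_ hlim
  have : ∀ᶠ p : ℝ × E in nhds (t0, z0), t0 - 1 < p.1 :=
    continuous_fst.continuousAt.eventually (lt_mem_nhds (by simp))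
  filter_upwards [this] with p hp
  exact key p.1 hp.le p.2


/-- Radial retraction onto the closed unit disc. -/
noncomputable def auxP (z : ℂ) : ℂ := (max 1 ‖z‖)⁻¹ • z

theorem auxP_of_mem {z : ℂ} (hz : z ∈ closedBall (0:ℂ) 1) : auxP z = z := by
  rw [mem_closedBall_zero_iff] at hz
  simp [auxP, max_eq_left hz]

theorem auxP_mem (z : ℂ) : auxP z ∈ closedBall (0:ℂ) 1 := by
  rw [mem_closedBall_zero_iff, auxP, norm_smul, norm_inv, Real.norm_eq_abs, abs_of_pos (by positivity)]
  rw [inv_mul_le_iff₀ (by positivity), mul_one]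
  exact le_max_right _ _

theorem auxP_lip : LipschitzWith 2 auxP := by
  apply LipschitzWith.of_dist_le_mul
  intro z w
  rw [dist_eq_norm, dist_eq_norm]
  set a := max 1 ‖z‖ with ha
  set b := max 1 ‖w‖ with hb
  have ha1 : 1 ≤ a := le_max_left _ _
  have hb1 : 1 ≤ b := le_max_left _ _
  have hwb : ‖w‖ ≤ b := le_max_right _ _
  have hab : |b - a| ≤ ‖z - w‖ := by
    have h1 : |b - a| ≤ |‖w‖ - ‖z‖| := by
      rw [ha, hb]; simpa using abs_max_sub_max_le_max 1 ‖w‖ 1 ‖z‖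
    exact h1.trans (by rw [norm_sub_rev]; exact abs_norm_sub_norm_le w z)
  have e : auxP z - auxP w = a⁻¹ • (z - w) + ((b - a) * (a⁻¹ * b⁻¹)) • w := by
    have : (b - a) * (a⁻¹ * b⁻¹) = a⁻¹ - b⁻¹ := by
      field_simp
    rw [this, auxP, auxP, ← ha, ← hb, smul_sub, sub_smul]; abel
  rw [e]
  have h1 : ‖a⁻¹ • (z - w)‖ ≤ ‖z - w‖ := by
    rw [norm_smul, norm_inv, Real.norm_eq_abs, abs_of_pos (by positivity)]
    exact mul_le_of_le_one_left (norm_nonneg _) (inv_le_one_of_one_le₀ ha1)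
  have h2 : ‖((b - a) * (a⁻¹ * b⁻¹)) • w‖ ≤ ‖z - w‖ := by
    rw [norm_smul, Real.norm_eq_abs, abs_mul, abs_of_pos (show 0 < a⁻¹ * b⁻¹ by positivity)]
    have : a⁻¹ * b⁻¹ * ‖w‖ ≤ 1 := by
      have h3 : b⁻¹ * ‖w‖ ≤ 1 := by
        rw [inv_mul_le_iff₀ (by positivity), mul_one]; exact hwb
      have h4 : a⁻¹ ≤ 1 := inv_le_one_of_one_le₀ ha1
      have : 0 ≤ b⁻¹ * ‖w‖ := by positivity
      have : 0 < a⁻¹ := by positivity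
      nlinarith
    calc |b - a| * (a⁻¹ * b⁻¹) * ‖w‖ = |b - a| * (a⁻¹ * b⁻¹ * ‖w‖) := by ring
      _ ≤ |b - a| * 1 := by gcongr
      _ ≤ _ := by rw [mul_one]; exact hab
  refine (norm_add_le _ _).trans ?_
  push_cast
  linarith

theorem aux_lipOn (F : ℂ → ℂ) (hF : ContDiffOn ℝ 1 F (closedBall 0 1)) :
    ∃ K : NNReal, LipschitzOnWith K F (closedBall 0 1) :=
  hF.exists_lipschitzOnWith one_ne_zero (convex_closedBall _ _) (isCompact_closedBall _ _)

theorem hasDerivAt_max_sq (x : ℝ) : HasDerivAt (fun x : ℝ => (max x 0)^2) (2 * max x 0) x := by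
  rcases lt_trichotomy x 0 with h | h | h
  · have : HasDerivAt (fun _ : ℝ => (0:ℝ)) 0 x := hasDerivAt_const x 0
    rw [max_eq_right h.le, mul_zero]
    refine this.congr_of_eventuallyEq ?_
    filter_upwards [gt_mem_nhds h] with y hy
    simp [max_eq_right (le_of_lt hy)]
  · subst h
    rw [max_self, mul_zero, hasDerivAt_iff_isLittleO]
    simp only [max_self, smul_zero, sub_zero, ne_eq, OfNat.ofNat_ne_zero, not_false_eq_true, zero_pow]
    rw [Asymptotics.isLittleO_iff]
    intro c hc
    filter_upwards [Metric.ball_mem_nhds (0:ℝ) hc] with y hy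
    rw [mem_ball_zero_iff, Real.norm_eq_abs] at hy
    rw [Real.norm_eq_abs, Real.norm_eq_abs, abs_of_nonneg (sq_nonneg _)]
    have : max y 0 ≤ |y| := max_le (le_abs_self y) (abs_nonneg y)
    have : 0 ≤ max y 0 := le_max_right _ _
    have : 0 ≤ |y| := abs_nonneg y
    nlinarith
  · have : HasDerivAt (fun y : ℝ => y^2) (2 * x) x := by simpa using hasDerivAt_pow 2 x
    rw [max_eq_left h.le]
    refine this.congr_of_eventuallyEq ?_
    filter_upwards [lt_mem_nhds h] with y hy
    simp [max_eq_left (le_of_lt hy)]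

theorem aux_inv (F : ℂ → ℂ) (hS : ∀ z ∈ sphere (0:ℂ) 1, (F z * (starRingEnd ℂ) z).re ≤ 0)
    (γ : ℝ → ℂ) (hγ : ∀ t, HasDerivAt γ (F (auxP (γ t))) t) (h0 : γ 0 ∈ closedBall (0:ℂ) 1)
    (t : ℝ) (ht : 0 ≤ t) : γ t ∈ closedBall (0:ℂ) 1 := by
  have hn : ∀ t, HasDerivAt (fun t => ‖γ t‖^2) (2 * (F (auxP (γ t)) * (starRingEnd ℂ) (γ t)).re) t := by
    intro t
    have := (hγ t).norm_sq
    convert this using 2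
    rw [Complex.inner]
  have hg : ∀ t, HasDerivAt (fun t => (max (‖γ t‖^2 - 1) 0)^2)
      (2 * max (‖γ t‖^2 - 1) 0 * (2 * (F (auxP (γ t)) * (starRingEnd ℂ) (γ t)).re)) t := by
    intro t
    exact (hasDerivAt_max_sq _).comp t ((hn t).sub_const 1)
  have hanti : Antitone (fun t => (max (‖γ t‖^2 - 1) 0)^2) := by
    apply antitone_of_hasDerivAt_nonpos hg
    intro t
    rcases le_or_gt (‖γ t‖^2 - 1) 0 with h | h
    · simp [max_eq_right h]
    · have h1 : 1 < ‖γ t‖ := by nlinarith [norm_nonneg (γ t)]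
      have hr : 0 < ‖γ t‖ := by linarith
      have hp : auxP (γ t) = (‖γ t‖)⁻¹ • γ t := by rw [auxP, max_eq_right h1.le]
      have hs : auxP (γ t) ∈ sphere (0:ℂ) 1 := by
        rw [mem_sphere_zero_iff_norm, hp, norm_smul, norm_inv, norm_norm, inv_mul_cancel₀ hr.ne']
      have h2 := hS _ hs
      have h3 : (F (auxP (γ t)) * (starRingEnd ℂ) (γ t)).re =
          ‖γ t‖ * (F (auxP (γ t)) * (starRingEnd ℂ) (auxP (γ t))).re := by
        conv_rhs => rw [show (starRingEnd ℂ) (auxP (γ t)) = ((‖γ t‖⁻¹ : ℝ) : ℂ) * (starRingEnd ℂ) (γ t) by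
          rw [hp, Complex.real_smul, map_mul, Complex.conj_ofReal]]
        rw [mul_left_comm, Complex.re_ofReal_mul]
        field_simp
      have h4 : (F (auxP (γ t)) * (starRingEnd ℂ) (γ t)).re ≤ 0 := by
        rw [h3]; exact mul_nonpos_of_nonneg_of_nonpos hr.le h2
      have h5 : 0 ≤ 2 * max (‖γ t‖^2 - 1) 0 := by positivity
      exact mul_nonpos_of_nonneg_of_nonpos h5 (by linarith)
  have := hanti ht
  rw [mem_closedBall_zero_iff] at h0 ⊢
  have h1 : ‖γ 0‖^2 - 1 ≤ 0 := by nlinarith [norm_nonneg (γ 0)]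
  simp only [max_eq_right h1] at this
  by_contra hc
  push Not at hc
  have h2 : 0 < ‖γ t‖^2 - 1 := by nlinarith
  rw [max_eq_left h2.le] at this
  nlinarith

theorem aux_discflow (F : ℂ → ℂ) (hF : ContDiffOn ℝ 1 F (closedBall 0 1))
    (hS : ∀ z ∈ sphere (0:ℂ) 1, (F z * (starRingEnd ℂ) z).re ≤ 0) :
    ∃ (φ : ℝ → ℂ → ℂ) (K : NNReal), (∀ z, φ 0 z = z) ∧
      (∀ z t, φ t z ∈ closedBall (0:ℂ) 1 → HasDerivAt (fun s => φ s z) (F (φ t z)) t) ∧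
      (∀ s t z, φ (s + t) z = φ s (φ t z)) ∧ Continuous (fun p : ℝ × ℂ => φ p.1 p.2) ∧
      (∀ t, 0 ≤ t → ∀ z w, dist (φ t z) (φ t w) ≤ dist z w * Real.exp (K * t)) ∧
      (∀ z ∈ closedBall (0:ℂ) 1, ∀ t, 0 ≤ t → φ t z ∈ closedBall (0:ℂ) 1) ∧
      ((∀ z ∈ sphere (0:ℂ) 1, (F z * (starRingEnd ℂ) z).re = 0) →
        ∀ z ∈ closedBall (0:ℂ) 1, ∀ t, φ t z ∈ closedBall (0:ℂ) 1) ∧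
      (F 0 = 0 → ∀ t, φ t 0 = 0) ∧
      (∀ t, 0 ≤ t → ∀ z w, dist (φ (-t) z) (φ (-t) w) ≤ dist z w * Real.exp (K * t)) := by
  obtain ⟨K, hK⟩ := aux_lipOn F hF
  obtain ⟨M, hM⟩ := (isCompact_closedBall (0:ℂ) 1).exists_bound_of_continuousOn hF.continuousOn
  have hL : LipschitzWith (K * 2) (fun z => F (auxP z)) := by
    rw [← lipschitzOnWith_univ]
    exact hK.comp (auxP_lip.lipschitzOnWith (s := univ)) (fun z _ => auxP_mem z)
  obtain ⟨φ, h0, hd, hg, hc, hl, hst, hb⟩ := aux_flow (fun z => F (auxP z)) (K * 2) M.toNNReal hL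
    (fun z => (hM _ (auxP_mem z)).trans (Real.le_coe_toNNReal M))
  have hfw : ∀ z ∈ closedBall (0:ℂ) 1, ∀ t, 0 ≤ t → φ t z ∈ closedBall (0:ℂ) 1 :=
    fun z hz t ht => aux_inv F hS (fun s => φ s z) (hd z) (by simpa [h0] using hz) t ht
  refine ⟨φ, K * 2, h0, ?_, hg, hc, hl, hfw, ?_,
    fun hF0 t => hst 0 (by rw [auxP_of_mem (by simp), hF0]) t, hb⟩
  · intro z t h
    have := hd z t
    rwa [auxP_of_mem h] at this
  · intro hS0 z hz t
    rcases le_total 0 t with ht | ht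
    · exact hfw z hz t ht
    · have := aux_inv (fun w => - F w) (fun w hw => by simp [hS0 w hw])
        (fun s => φ (-s) z)
        (fun s => by simpa [Function.comp_def] using (hd z (-s)).scomp s (hasDerivAt_neg s))
        (by simpa [h0] using hz) (-t) (by linarith)
      simpa using this


theorem aux_gron (K ε x : ℝ) (hK : 1 ≤ K) (hε : 0 ≤ ε) (hKx : K * x ≤ 1) :
    gronwallBound 0 K ε x ≤ 2 * ε := by
  rw [gronwallBound_of_K_ne_0 (by linarith)]
  have h1 : Real.exp (K * x) ≤ 3 :=
    (Real.exp_le_exp.2 hKx).trans (by linarith [Real.exp_one_lt_d9])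
  have h2 : ε / K ≤ ε := div_le_self hε hK
  have h3 : 0 ≤ ε / K := by positivity
  simp only [zero_mul, zero_add]
  nlinarith

theorem aux_C1_small (F : ℂ → ℂ) (hF : ContDiffOn ℝ 1 F (closedBall 0 1))
    (φ : ℝ → ℂ → ℂ) (h0 : ∀ z ∈ closedBall (0:ℂ) 1, φ 0 z = z) (K : NNReal)
    (hm : ∀ z ∈ closedBall (0:ℂ) 1, ∀ t, 0 ≤ t → φ t z ∈ closedBall (0:ℂ) 1)
    (hd : ∀ z ∈ closedBall (0:ℂ) 1, ∀ t, 0 ≤ t → HasDerivAt (fun s => φ s z) (F (φ t z)) t)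
    (hl : ∀ t, 0 ≤ t → ∀ z w, dist (φ t z) (φ t w) ≤ dist z w * Real.exp (K * t)) :
    ∃ T : ℝ, 0 < T ∧ ∀ t ∈ Icc 0 T, ContDiffOn ℝ 1 (φ t) (closedBall 0 1) := by
  set D := closedBall (0:ℂ) 1 with hD
  have hUD : UniqueDiffOn ℝ D := uniqueDiffOn_convex (convex_closedBall _ _)
    (by rw [hD, interior_closedBall _ one_ne_zero]; exact ⟨0, by simp⟩)
  set A : ℂ → (ℂ →L[ℝ] ℂ) := fun z => fderivWithin ℝ F D z with hA
  have hAc : ContinuousOn A D := hF.continuousOn_fderivWithin hUD le_rfl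
  have hFd : ∀ z ∈ D, HasFDerivWithinAt F (A z) D z := fun z hz =>
    (hF.differentiableOn one_ne_zero z hz).hasFDerivWithinAt
  obtain ⟨N', hN'⟩ := (isCompact_closedBall (0:ℂ) 1).exists_bound_of_continuousOn hAc
  set N : NNReal := N'.toNNReal with hNdef
  have hN : ∀ z ∈ D, ‖A z‖ ≤ N := fun z hz => (hN' z hz).trans (Real.le_coe_toNNReal _)
  set T : ℝ := 1 / (2 * (N + 1)) with hT
  have hTpos : 0 < T := by positivity
  have hTN : (N + 1 : ℝ) * T = 1 / 2 := by rw [hT]; field_simp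
  have hcont : ∀ z ∈ D, ContinuousOn (fun t => φ t z) (Icc 0 T) := fun z hz t ht =>
    (hd z hz t ht.1).continuousAt.continuousWithinAt
  -- variational equation
  have hY : ∀ z ∈ D, ∃ Y : ℝ → (ℂ →L[ℝ] ℂ), Y 0 = ContinuousLinearMap.id ℝ ℂ ∧
      ∀ t ∈ Icc 0 T, HasDerivWithinAt Y ((A (φ t z)).comp (Y t)) (Icc 0 T) t := by
    intro z hz
    have h0T : (0:ℝ) ∈ Icc 0 T := ⟨le_rfl, hTpos.le⟩
    have hPL : IsPicardLindelof (fun t (x : ℂ →L[ℝ] ℂ) => (A (φ t z)).comp x)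
        (tmin := 0) (tmax := T) ⟨0, h0T⟩ (ContinuousLinearMap.id ℝ ℂ) 1 0 (2 * N) N := by
      refine ⟨?_, ?_, ?_, ?_⟩
      · intro t ht
        apply LipschitzWith.lipschitzOnWith
        apply LipschitzWith.of_dist_le_mul
        intro x y
        rw [dist_eq_norm, dist_eq_norm, ← ContinuousLinearMap.comp_sub]
        refine (ContinuousLinearMap.opNorm_comp_le _ _).trans ?_
        gcongr
        exact hN _ (hm z hz t ht.1)
      · intro x hx
        have : ContinuousOn (fun t => A (φ t z)) (Icc 0 T) :=
          hAc.comp (hcont z hz) (fun t ht => hm z hz t ht.1)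
        exact this.clm_comp continuousOn_const
      · intro t ht x hx
        refine (ContinuousLinearMap.opNorm_comp_le _ _).trans ?_
        have h1 : ‖x‖ ≤ 2 := by
          rw [mem_closedBall, dist_eq_norm] at hx
          have h2 : ‖ContinuousLinearMap.id ℝ ℂ‖ ≤ 1 := ContinuousLinearMap.norm_id_le
          have h3 : ‖x‖ ≤ ‖x - ContinuousLinearMap.id ℝ ℂ‖ + ‖ContinuousLinearMap.id ℝ ℂ‖ :=
            norm_le_norm_sub_add _ _
          have hx' : ‖x - ContinuousLinearMap.id ℝ ℂ‖ ≤ 1 := by simpa using hx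
          linarith
        push_cast
        have := hN _ (hm z hz t ht.1)
        have := norm_nonneg x
        have := N.2
        calc ‖A (φ t z)‖ * ‖x‖ ≤ N * 2 := by gcongr
          _ = 2 * N := by ring
      · have : max (T - 0) (0 - 0) = T := by simp [hTpos.le]
        simp only [this]
        push_cast
        nlinarith
    obtain ⟨Y, h1, h2⟩ := hPL.exists_eq_forall_mem_Icc_hasDerivWithinAt₀
    exact ⟨Y, h1, h2⟩
  choose! Y hY0 hYd using hY
  have hYc : ∀ z ∈ D, ContinuousOn (Y z) (Icc 0 T) := fun z hz t ht =>
    (hYd z hz t ht).continuousWithinAt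
  have hYd' : ∀ z ∈ D, ∀ t ∈ Ico 0 T, HasDerivWithinAt (Y z) ((A (φ t z)).comp (Y z t)) (Ici t) t :=
    fun z hz t ht => (hYd z hz t ⟨ht.1, ht.2.le⟩).mono_of_mem_nhdsWithin
      (Icc_mem_nhdsGE_of_mem ht)
  have hYb : ∀ z ∈ D, ∀ t ∈ Icc 0 T, ‖Y z t‖ ≤ 3 := by
    intro z hz t ht
    have := norm_le_gronwallBound_of_norm_deriv_right_le (K := N) (ε := 0) (δ := 1)
      (hYc z hz) (hYd' z hz) (by rw [hY0 z hz]; exact ContinuousLinearMap.norm_id_le)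
      (fun t ht => by
        rw [add_zero]
        refine (ContinuousLinearMap.opNorm_comp_le _ _).trans ?_
        gcongr
        exact hN _ (hm z hz t ht.1)) t ht
    rw [gronwallBound_ε0, one_mul, sub_zero] at this
    have h1 : (N:ℝ) * t ≤ 1 := by
      have := ht.2; have := ht.1; have := N.2; 
      have : (N:ℝ) * t ≤ N * T := by gcongr
      nlinarith
    linarith [Real.exp_le_exp.2 h1, Real.exp_one_lt_d9]
  set C : ℝ := Real.exp (K * T) with hC
  have hCpos : 0 < C := Real.exp_pos _
  have hl' : ∀ t ∈ Icc 0 T, ∀ z w, ‖φ t w - φ t z‖ ≤ C * ‖w - z‖ := by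
    intro t ht z w
    have := hl t ht.1 w z
    rw [dist_eq_norm, dist_eq_norm] at this
    refine this.trans ?_
    rw [mul_comm]
    have h1 : (K:ℝ) * t ≤ K * T := by gcongr; exact ht.2
    have h2 : Real.exp (K * t) ≤ C := Real.exp_le_exp.2 h1
    gcongr
  have hUC := (isCompact_closedBall (0:ℂ) 1).uniformContinuousOn_of_continuous hAc
  rw [Metric.uniformContinuousOn_iff] at hUC
  have hU : ∀ ε > 0, ∃ δ > 0, ∀ z ∈ D, ∀ w ∈ D, ‖w - z‖ < δ → ∀ t ∈ Icc 0 T,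
      ‖F (φ t w) - F (φ t z) - A (φ t z) (φ t w - φ t z)‖ ≤ ε * ‖φ t w - φ t z‖ ∧
      ‖A (φ t w) - A (φ t z)‖ ≤ ε := by
    intro ε hε
    obtain ⟨δ, hδ, h⟩ := hUC ε hε
    refine ⟨δ / C, by positivity, fun z hz w hw hzw t ht => ?_⟩
    have hclose : ‖φ t w - φ t z‖ < δ := by
      refine (hl' t ht z w).trans_lt ?_
      rw [lt_div_iff₀ hCpos] at hzw
      linarith
    have hzt := hm z hz t ht.1
    have hwt := hm w hw t ht.1
    refine ⟨?_, ?_⟩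
    · refine Convex.norm_image_sub_le_of_norm_hasFDerivWithin_le' (𝕜 := ℝ) (s := D ∩ ball (φ t z) δ)
        (f' := A) (fun x hx => (hFd x hx.1).mono inter_subset_left) ?_
        ((convex_closedBall _ _).inter (convex_ball _ _)) ⟨hzt, mem_ball_self hδ⟩
        ⟨hwt, by rwa [mem_ball, dist_eq_norm]⟩
      intro x hx
      have := h x hx.1 (φ t z) hzt hx.2
      rw [dist_eq_norm] at this
      exact this.le
    · have := h (φ t w) hwt (φ t z) hzt (by rwa [dist_eq_norm])
      rw [dist_eq_norm] at this
      exact this.le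
  refine ⟨T, hTpos, fun t ht => ?_⟩
  have hKt : (N + 1 : ℝ) * (t - 0) ≤ 1 := by
    have : (N + 1 : ℝ) * (t - 0) ≤ (N + 1) * T := by gcongr; linarith [ht.2]
    linarith
  have hN1 : (1:ℝ) ≤ N + 1 := by linarith [N.2]
  -- derivative
  have hder : ∀ z ∈ D, HasFDerivWithinAt (φ t) (Y z t) D z := by
    intro z hz
    rw [hasFDerivWithinAt_iff_isLittleO, Asymptotics.isLittleO_iff]
    intro c hc
    obtain ⟨δ, hδ, h⟩ := hU (c / (2 * C)) (by positivity)
    filter_upwards [self_mem_nhdsWithin, mem_nhdsWithin_of_mem_nhds (ball_mem_nhds z hδ)] with w hw hwδ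
    rw [mem_ball, dist_eq_norm] at hwδ
    have hg := norm_le_gronwallBound_of_norm_deriv_right_le (K := N + 1)
      (ε := c / 2 * ‖w - z‖) (δ := 0) (a := 0) (b := T)
      (f := fun s => φ s w - φ s z - Y z s (w - z))
      (f' := fun s => F (φ s w) - F (φ s z) - (A (φ s z)) (Y z s (w - z)))
      (((hcont w hw).sub (hcont z hz)).sub ((hYc z hz).clm_apply continuousOn_const))
      (fun s hs => ((hd w hw s hs.1).hasDerivWithinAt.sub (hd z hz s hs.1).hasDerivWithinAt).sub
        (by simpa using (hYd' z hz s hs).clm_apply (hasDerivWithinAt_const s (Ici s) (w - z))))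
      (by simp [h0 w hw, h0 z hz, hY0 z hz])
      (fun s hs => by
        have hs' : s ∈ Icc 0 T := ⟨hs.1, hs.2.le⟩
        have e : F (φ s w) - F (φ s z) - (A (φ s z)) (Y z s (w - z)) =
          (F (φ s w) - F (φ s z) - A (φ s z) (φ s w - φ s z)) +
            A (φ s z) (φ s w - φ s z - Y z s (w - z)) := by
          rw [map_sub (A (φ s z)) (φ s w - φ s z)]; abel
        rw [e]
        have h1 := (h z hz w hw hwδ s hs').1
        have h2 : ‖A (φ s z) (φ s w - φ s z - Y z s (w - z))‖ ≤
            (N + 1) * ‖φ s w - φ s z - Y z s (w - z)‖ := by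
          refine (ContinuousLinearMap.le_opNorm _ _).trans ?_
          gcongr
          linarith [hN _ (hm z hz s hs.1)]
        have h3 : c / (2 * C) * ‖φ s w - φ s z‖ ≤ c / 2 * ‖w - z‖ := by
          calc c / (2 * C) * ‖φ s w - φ s z‖ ≤ c / (2 * C) * (C * ‖w - z‖) := by
                gcongr; exact hl' s hs' z w
            _ = _ := by field_simp
        refine (norm_add_le _ _).trans ?_
        linarith) t ht
    refine hg.trans ((aux_gron _ _ _ hN1 (by positivity) hKt).trans_eq (by ring))
  have hcY : ContinuousOn (fun z => Y z t) D := by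
    rw [Metric.continuousOn_iff]
    intro z hz c hc
    obtain ⟨δ, hδ, h⟩ := hU (c / 12) (by positivity)
    refine ⟨δ, hδ, fun w hw hwδ => ?_⟩
    rw [dist_eq_norm] at hwδ ⊢
    have hg := norm_le_gronwallBound_of_norm_deriv_right_le (K := N + 1)
      (ε := c / 4) (δ := 0) (a := 0) (b := T)
      (f := fun s => Y w s - Y z s)
      (f' := fun s => (A (φ s w)).comp (Y w s) - (A (φ s z)).comp (Y z s))
      ((hYc w hw).sub (hYc z hz))
      (fun s hs => (hYd' w hw s hs).sub (hYd' z hz s hs))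
      (by simp [hY0 w hw, hY0 z hz])
      (fun s hs => by
        have hs' : s ∈ Icc 0 T := ⟨hs.1, hs.2.le⟩
        have e : (A (φ s w)).comp (Y w s) - (A (φ s z)).comp (Y z s) =
          (A (φ s w) - A (φ s z)).comp (Y w s) + (A (φ s z)).comp (Y w s - Y z s) := by
          rw [ContinuousLinearMap.sub_comp, ContinuousLinearMap.comp_sub]; abel
        rw [e]
        have h1 := (h z hz w hw hwδ s hs').2
        have h2 : ‖(A (φ s z)).comp (Y w s - Y z s)‖ ≤ (N + 1) * ‖Y w s - Y z s‖ := by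
          refine (ContinuousLinearMap.opNorm_comp_le _ _).trans ?_
          gcongr
          linarith [hN _ (hm z hz s hs.1)]
        have h3 : ‖(A (φ s w) - A (φ s z)).comp (Y w s)‖ ≤ c / 4 := by
          refine (ContinuousLinearMap.opNorm_comp_le _ _).trans ?_
          have := hYb w hw s hs'
          calc _ ≤ c / 12 * 3 := by gcongr
            _ = c / 4 := by ring
        refine (norm_add_le _ _).trans ?_
        linarith) t ht
    refine (hg.trans (aux_gron _ _ _ hN1 (by positivity) hKt)).trans_lt (by linarith)
  have hone : (1 : WithTop ℕ∞) = 0 + 1 := by simp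
  rw [hone, contDiffOn_succ_iff_fderivWithin hUD]
  refine ⟨fun z hz => (hder z hz).differentiableWithinAt, by simp, ?_⟩
  rw [contDiffOn_zero]
  exact hcY.congr (fun z hz => (hder z hz).fderivWithin (hUD z hz))

theorem aux_C1 (F : ℂ → ℂ) (hF : ContDiffOn ℝ 1 F (closedBall 0 1))
    (φ : ℝ → ℂ → ℂ) (h0 : ∀ z ∈ closedBall (0:ℂ) 1, φ 0 z = z) (K : NNReal)
    (hm : ∀ z ∈ closedBall (0:ℂ) 1, ∀ t, 0 ≤ t → φ t z ∈ closedBall (0:ℂ) 1)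
    (hd : ∀ z ∈ closedBall (0:ℂ) 1, ∀ t, 0 ≤ t → HasDerivAt (fun s => φ s z) (F (φ t z)) t)
    (hg : ∀ s t z, φ (s + t) z = φ s (φ t z))
    (hl : ∀ t, 0 ≤ t → ∀ z w, dist (φ t z) (φ t w) ≤ dist z w * Real.exp (K * t)) :
    ∀ t, 0 ≤ t → ContDiffOn ℝ 1 (φ t) (closedBall 0 1) := by
  obtain ⟨T, hT, h⟩ := aux_C1_small F hF φ h0 K hm hd hl
  have hn : ∀ n : ℕ, ∀ t, 0 ≤ t → t ≤ n * T → ContDiffOn ℝ 1 (φ t) (closedBall 0 1) := by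
    intro n
    induction n with
    | zero => 
      intro t ht ht'
      exact h t ⟨ht, by simp at ht'; linarith⟩
    | succ n ih =>
      intro t ht ht'
      rcases le_total t T with h1 | h1
      · exact h t ⟨ht, h1⟩
      · have h2 := ih (t - T) (by linarith) (by push_cast at ht'; linarith)
        have h3 := h T ⟨hT.le, le_rfl⟩
        have := h2.comp h3 (fun z hz => hm z hz T hT.le)
        refine this.congr (fun z _ => ?_)
        rw [Function.comp_apply, ← hg, sub_add_cancel]
  intro t ht
  obtain ⟨n, hn'⟩ := exists_nat_ge (t / T)
  exact hn n t ht (by rwa [div_le_iff₀ hT] at hn')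


theorem aux_unique : UniqueDiffOn ℝ (closedBall (0:ℂ) 1) :=
  uniqueDiffOn_convex (convex_closedBall _ _)
    (by rw [interior_closedBall _ one_ne_zero]; exact ⟨0, by simp⟩)

theorem aux_ham (W : ℂ → ℂ)
    (hW : ContDiffOn ℝ 1 W (closedBall 0 1))
    (hdiv : ∀ z ∈ closedBall (0:ℂ) 1,
      (fderiv ℝ W z 1).re + (fderiv ℝ W z Complex.I).im = 0) :
    ∃ H : ℂ → ℝ, ∀ z ∈ closedBall (0:ℂ) 1,
      HasFDerivWithinAt H (innerSL ℝ (Complex.I * W z)) (closedBall 0 1) z := by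
  set D := closedBall (0:ℂ) 1 with hD
  have hUD : UniqueDiffOn ℝ D := aux_unique
  have hAc : ContinuousOn (fderivWithin ℝ W D) D := hW.continuousOn_fderivWithin hUD le_rfl
  have hdiv' : ∀ z ∈ D, (fderivWithin ℝ W D z 1).re + (fderivWithin ℝ W D z Complex.I).im = 0 := by
    have h1 : EqOn (fun z => (fderivWithin ℝ W D z 1).re + (fderivWithin ℝ W D z Complex.I).im)
        (fun _ => 0) (ball 0 1) := by
      intro z hz
      have : fderivWithin ℝ W D z = fderiv ℝ W z :=
        fderivWithin_of_mem_nhds (Filter.mem_of_superset (isOpen_ball.mem_nhds hz) ball_subset_closedBall)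
      simp only [this]
      exact hdiv z (ball_subset_closedBall hz)
    have h2 := h1.of_subset_closure (t := D) (by
        have e1 := Complex.continuous_re.comp_continuousOn (hAc.clm_apply (continuousOn_const (c := (1:ℂ))))
        have e2 := Complex.continuous_im.comp_continuousOn (hAc.clm_apply (continuousOn_const (c := Complex.I)))
        exact e1.add e2) continuousOn_const ball_subset_closedBall
        (by rw [closure_ball _ one_ne_zero])
    exact fun z hz => h2 hz
  let M : ℂ →L[ℝ] ℂ := ContinuousLinearMap.mul ℝ ℂ Complex.I
  let Λ : ℂ →L[ℝ] (ℂ →L[ℝ] ℝ) := (innerSL ℝ : ℂ →L[ℝ] (ℂ →L[ℝ] ℝ)).comp M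
  have hω : ∀ z ∈ D, HasFDerivWithinAt (fun z => Λ (W z)) (Λ.comp (fderivWithin ℝ W D z)) D z := by
    intro z hz
    exact Λ.hasFDerivAt.comp_hasFDerivWithinAt z
      (hW.differentiableOn one_ne_zero z hz).hasFDerivWithinAt
  obtain ⟨H, hH⟩ := (convex_closedBall (0:ℂ) 1).exists_forall_hasFDerivWithinAt_of_hasFDerivWithinAt_symmetric
    hω (by
      intro z hz x _ y _
      have h := hdiv' z hz
      set A := fderivWithin ℝ W D z
      have hx : ∀ x : ℂ, A x = x.re • A 1 + x.im • A Complex.I := by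
        intro x
        conv_lhs => rw [← Complex.re_add_im x]
        rw [map_add, ← A.map_smul, ← A.map_smul]
        simp
      simp only [ContinuousLinearMap.comp_apply]
      change inner ℝ (Complex.I * A x) y = inner ℝ (Complex.I * A y) x
      rw [hx x, hx y]
      simp only [Complex.inner, Complex.mul_re, Complex.mul_im, Complex.add_re, Complex.add_im,
        Complex.real_smul, Complex.conj_re, Complex.conj_im, Complex.I_re, Complex.I_im,
        Complex.ofReal_re, Complex.ofReal_im]
      linear_combination (x.re * y.im - x.im * y.re) * h)
  exact ⟨H, hH⟩

theorem aux_sphere : IsPreconnected (sphere (0:ℂ) 1) :=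
  isPreconnected_sphere (by rw [Complex.rank_real_complex]; norm_num) 0 1

theorem aux_sign (W : ℂ → ℂ)
    (hW : ContDiffOn ℝ 1 W (closedBall 0 1))
    (htan : ∀ z ∈ sphere (0:ℂ) 1, (W z * (starRingEnd ℂ) z).re = 0)
    (hzero : ∀ z ∈ closedBall (0:ℂ) 1, (W z = 0 ↔ z = 0)) :
    ∃ σ : ℝ, σ ≠ 0 ∧ ∀ z ∈ sphere (0:ℂ) 1,
      0 < (σ * (Complex.I * W z) * (starRingEnd ℂ) z).re := by
  have hc : ContinuousOn (fun z => (Complex.I * W z * (starRingEnd ℂ) z).re) (sphere (0:ℂ) 1) := by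
    have h1 := hW.continuousOn.mono (sphere_subset_closedBall (x := (0:ℂ)) (ε := 1))
    have h2 : Continuous (fun z : ℂ => (starRingEnd ℂ) z) := Complex.continuous_conj
    exact Complex.continuous_re.comp_continuousOn ((continuousOn_const.mul h1).mul h2.continuousOn)
  have hne : ∀ z ∈ sphere (0:ℂ) 1, (Complex.I * W z * (starRingEnd ℂ) z).re ≠ 0 := by
    intro z hz h
    have hz1 : z ≠ 0 := by rintro rfl; simp at hz
    have h1 := htan z hz
    rw [mul_assoc, Complex.I_mul_re] at h
    have h2 : W z * (starRingEnd ℂ) z = 0 := Complex.ext h1 (neg_eq_zero.1 h)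
    rcases mul_eq_zero.1 h2 with h3 | h3
    · exact hz1 ((hzero z (sphere_subset_closedBall hz)).1 h3)
    · exact hz1 (by simpa using h3)
  have h1S : (1:ℂ) ∈ sphere (0:ℂ) 1 := by simp
  have himg := aux_sphere.image _ hc
  have hoc := himg.ordConnected
  have hno : (0:ℝ) ∉ (fun z => (Complex.I * W z * (starRingEnd ℂ) z).re) '' sphere (0:ℂ) 1 := by
    rintro ⟨z, hz, h⟩; exact hne z hz h
  have hmul : ∀ (σ : ℝ) z, (σ * (Complex.I * W z) * (starRingEnd ℂ) z).re =
      σ * (Complex.I * W z * (starRingEnd ℂ) z).re := by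
    intro σ z; rw [mul_assoc, Complex.re_ofReal_mul]
  rcases lt_or_gt_of_ne (hne 1 h1S) with h | h
  · refine ⟨-1, by norm_num, fun z hz => ?_⟩
    rw [hmul]
    by_contra hcon
    exact hno (hoc.out (mem_image_of_mem _ h1S) (mem_image_of_mem _ hz) ⟨h.le, by linarith⟩)
  · refine ⟨1, by norm_num, fun z hz => ?_⟩
    rw [hmul]
    by_contra hcon
    exact hno (hoc.out (mem_image_of_mem _ hz) (mem_image_of_mem _ h1S) ⟨by linarith, h.le⟩)


/-- A Lyapunov function `H` on the closed disc, with gradient `G`, and the flow `φ` of `-G`. -/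
structure AuxGrad (G : ℂ → ℂ) (H : ℂ → ℝ) (φ : ℝ → ℂ → ℂ) : Prop where
  Gc : ContinuousOn G (closedBall 0 1)
  Hd : ∀ z ∈ closedBall (0:ℂ) 1, HasFDerivWithinAt H (innerSL ℝ (G z)) (closedBall 0 1) z
  G0 : ∀ z ∈ closedBall (0:ℂ) 1, (G z = 0 ↔ z = 0)
  Gt : ∀ z ∈ sphere (0:ℂ) 1, inner ℝ (G z) (Complex.I * z) = 0
  φ0 : ∀ z, φ 0 z = z
  φd : ∀ z ∈ closedBall (0:ℂ) 1, ∀ t, 0 ≤ t → HasDerivAt (fun s => φ s z) (-G (φ t z)) t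
  φg : ∀ s t z, φ (s + t) z = φ s (φ t z)
  φc : Continuous (fun p : ℝ × ℂ => φ p.1 p.2)
  φm : ∀ z ∈ closedBall (0:ℂ) 1, ∀ t, 0 ≤ t → φ t z ∈ closedBall (0:ℂ) 1
  φz : ∀ t, φ t 0 = 0

namespace AuxGrad

variable {G : ℂ → ℂ} {H : ℂ → ℝ} {φ : ℝ → ℂ → ℂ}

theorem Hc (A : AuxGrad G H φ) : ContinuousOn H (closedBall 0 1) :=
  fun z hz => (A.Hd z hz).continuousWithinAt

theorem φct (A : AuxGrad G H φ) (z : ℂ) : Continuous (fun t => φ t z) :=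
  A.φc.comp (continuous_id.prodMk continuous_const)

theorem φcz (A : AuxGrad G H φ) (t : ℝ) : Continuous (φ t) :=
  A.φc.comp (continuous_const.prodMk continuous_id)

theorem decay (A : AuxGrad G H φ) {z : ℂ} (hz : z ∈ closedBall (0:ℂ) 1) {T c : ℝ} (hT : 0 ≤ T)
    (hc : ∀ t ∈ Icc 0 T, c ≤ ‖G (φ t z)‖^2) : H (φ T z) ≤ H z - c * T := by
  have hd : ∀ t ∈ Icc 0 T, HasDerivWithinAt (fun t => H (φ t z) + c * t)
      (-‖G (φ t z)‖^2 + c) (Icc 0 T) t := by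
    intro t ht
    have h1 := (A.Hd _ (A.φm z hz t ht.1)).comp_hasDerivWithinAt t
      (A.φd z hz t ht.1).hasDerivWithinAt (fun s (hs : s ∈ Icc 0 T) => A.φm z hz s hs.1)
    have h2 : HasDerivWithinAt (fun t : ℝ => c * t) c (Icc 0 T) t := by
      simpa using ((hasDerivAt_id t).const_mul c).hasDerivWithinAt
    have h3 := h1.add h2
    simpa [Function.comp_def, Pi.add_def] using h3
  have : AntitoneOn (fun t => H (φ t z) + c * t) (Icc 0 T) := by
    refine antitoneOn_of_hasDerivWithinAt_nonpos (f' := fun t => -‖G (φ t z)‖^2 + c) (convex_Icc 0 T)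
      (fun t ht => (hd t ht).continuousWithinAt)
      (fun t ht => (hd t (interior_subset ht)).mono interior_subset) ?_
    intro t ht
    linarith [hc t (interior_subset ht)]
  have := this ⟨le_rfl, hT⟩ ⟨hT, le_rfl⟩ hT
  simp only [A.φ0] at this
  linarith

theorem anti (A : AuxGrad G H φ) {z : ℂ} (hz : z ∈ closedBall (0:ℂ) 1) {s t : ℝ} (hs : 0 ≤ s)
    (hst : s ≤ t) : H (φ t z) ≤ H (φ s z) := by
  have := A.decay (A.φm z hz s hs) (T := t - s) (c := 0) (by linarith) (fun _ _ => by positivity)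
  rw [← A.φg, sub_add_cancel] at this
  linarith

theorem ne_zero (A : AuxGrad G H φ) {z : ℂ} (hz0 : z ≠ 0) (t : ℝ) : φ t z ≠ 0 := by
  intro h
  apply hz0
  have := A.φg (-t) t z
  rw [h, A.φz, neg_add_cancel, A.φ0] at this
  exact this

theorem lt_of_pos (A : AuxGrad G H φ) {z : ℂ} (hz : z ∈ closedBall (0:ℂ) 1) (hz0 : z ≠ 0) {t : ℝ}
    (ht : 0 < t) : H (φ t z) < H z := by
  have hc : ContinuousOn (fun s => ‖G (φ s z)‖^2) (Icc 0 t) := by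
    have : ContinuousOn (fun s => G (φ s z)) (Icc 0 t) :=
      A.Gc.comp (A.φct z).continuousOn (fun s hs => A.φm z hz s hs.1)
    exact this.norm.pow 2
  obtain ⟨s, hs, hmin⟩ := isCompact_Icc.exists_isMinOn (nonempty_Icc.2 ht.le) hc
  have h1 := A.decay hz ht.le (c := ‖G (φ s z)‖^2) (fun r hr => hmin hr)
  have h2 : G (φ s z) ≠ 0 := fun h => A.ne_zero hz0 s ((A.G0 _ (A.φm z hz s hs.1)).1 h)
  have h3 : 0 < ‖G (φ s z)‖^2 := by positivity
  nlinarith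

theorem strict (A : AuxGrad G H φ) {z : ℂ} (hz : z ∈ closedBall (0:ℂ) 1) (hz0 : z ≠ 0) {s t : ℝ}
    (hs : 0 ≤ s) (hst : s < t) : H (φ t z) < H (φ s z) := by
  have := A.lt_of_pos (A.φm z hz s hs) (A.ne_zero hz0 s) (t := t - s) (by linarith)
  rwa [← A.φg, sub_add_cancel] at this

theorem min (A : AuxGrad G H φ) {z : ℂ} (hz : z ∈ closedBall (0:ℂ) 1) (hz0 : z ≠ 0) : H 0 < H z := by
  obtain ⟨m, hm, hmin⟩ := (isCompact_closedBall (0:ℂ) 1).exists_isMinOn ⟨0, by simp⟩ A.Hc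
  have hm0 : m = 0 := by
    by_contra h
    exact absurd (hmin (A.φm m hm 1 zero_le_one)) (not_le.2 (A.lt_of_pos hm h one_pos))
  subst hm0
  exact (hmin (A.φm z hz 1 zero_le_one)).trans_lt (A.lt_of_pos hz hz0 one_pos)

theorem sphere_const (A : AuxGrad G H φ) {z : ℂ} (hz : z ∈ sphere (0:ℂ) 1) : H z = H 1 := by
  have hS : ∀ θ : ℝ, Complex.exp (θ * Complex.I) ∈ sphere (0:ℂ) 1 := fun θ => by
    simp [Complex.norm_exp_ofReal_mul_I]
  have hd : ∀ θ : ℝ, HasDerivAt (fun θ : ℝ => H (Complex.exp (θ * Complex.I))) 0 θ := by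
    intro θ
    have h1 : HasDerivAt (fun θ : ℝ => Complex.exp (θ * Complex.I))
        (Complex.I * Complex.exp (θ * Complex.I)) θ := by
      have h2 : HasDerivAt (fun θ : ℝ => (θ:ℂ) * Complex.I) Complex.I θ := by
        simpa using (Complex.ofRealCLM.hasDerivAt (x := θ)).mul_const Complex.I
      simpa [mul_comm] using h2.cexp
    have h2 := (A.Hd _ (sphere_subset_closedBall (hS θ))).comp_hasDerivWithinAt θ
      (h1.hasDerivWithinAt (s := univ)) (fun s _ => sphere_subset_closedBall (hS s))
    rw [hasDerivWithinAt_univ] at h2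
    have h3 := A.Gt _ (hS θ)
    simpa [Function.comp_def, h3] using h2
  have := is_const_of_deriv_eq_zero (fun θ => (hd θ).differentiableAt) (fun θ => (hd θ).deriv)
    z.arg 0
  have hz1 : ‖z‖ = 1 := by simpa using hz
  have e := Complex.norm_mul_exp_arg_mul_I z
  rw [hz1, Complex.ofReal_one, one_mul] at e
  simpa [e] using this

theorem max_aux (A : AuxGrad G H φ) {m : ℂ} (hm : m ∈ closedBall (0:ℂ) 1)
    (hmax : ∀ z ∈ closedBall (0:ℂ) 1, H z ≤ H m) : m ∈ sphere (0:ℂ) 1 := by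
  by_contra hS
  have hb : m ∈ ball (0:ℂ) 1 := by
    rw [mem_ball_zero_iff]; rw [mem_closedBall_zero_iff] at hm
    rw [mem_sphere_zero_iff_norm] at hS
    exact lt_of_le_of_ne hm hS
  have hn : closedBall (0:ℂ) 1 ∈ nhds m :=
    Filter.mem_of_superset (isOpen_ball.mem_nhds hb) ball_subset_closedBall
  have hloc : IsLocalMax H m := by
    filter_upwards [hn] with z hz using hmax z hz
  have h1 := hloc.hasFDerivAt_eq_zero ((A.Hd m hm).hasFDerivAt hn)
  have h2 : G m = 0 := by
    have := congrArg (fun L => L (G m)) h1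
    simpa using this
  have h3 := (A.G0 m hm).1 h2
  subst h3
  have := A.min (z := 1) (by simp) one_ne_zero
  linarith [hmax 1 (by simp)]

theorem max (A : AuxGrad G H φ) {z : ℂ} (hz : z ∈ closedBall (0:ℂ) 1) : H z ≤ H 1 := by
  obtain ⟨m, hm, hmax⟩ := (isCompact_closedBall (0:ℂ) 1).exists_isMaxOn ⟨0, by simp⟩ A.Hc
  have hmS := A.max_aux hm (fun z hz => hmax hz)
  rw [← A.sphere_const hmS]
  exact hmax hz

theorem max_eq (A : AuxGrad G H φ) {z : ℂ} (hz : z ∈ closedBall (0:ℂ) 1) (h : H z = H 1) :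
    z ∈ sphere (0:ℂ) 1 :=
  A.max_aux hz (fun w hw => by rw [h]; exact A.max hw)

theorem attract (A : AuxGrad G H φ) {m : ℝ} (hm : H 0 < m) :
    ∃ T, 0 ≤ T ∧ ∀ w ∈ closedBall (0:ℂ) 1, ∀ t, T ≤ t → H (φ t w) < m := by
  have hK : IsCompact (closedBall (0:ℂ) 1 ∩ H ⁻¹' Ici m) :=
    (isCompact_closedBall (0:ℂ) 1).of_isClosed_subset
      (A.Hc.preimage_isClosed_of_isClosed isClosed_closedBall isClosed_Ici) inter_subset_left
  have hδ : ∃ δ > 0, ∀ w ∈ closedBall (0:ℂ) 1, m ≤ H w → δ ≤ ‖G w‖^2 := by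
    rcases (closedBall (0:ℂ) 1 ∩ H ⁻¹' Ici m).eq_empty_or_nonempty with h | h
    · refine ⟨1, one_pos, fun w hw hw' => ?_⟩
      have : w ∈ closedBall (0:ℂ) 1 ∩ H ⁻¹' Ici m := ⟨hw, hw'⟩
      rw [h] at this
      exact this.elim
    · obtain ⟨p, hp, hmin⟩ := hK.exists_isMinOn h ((A.Gc.mono inter_subset_left).norm.pow 2)
      refine ⟨‖G p‖^2, ?_, fun w hw hw' => hmin ⟨hw, hw'⟩⟩
      have hp0 : p ≠ 0 := by
        rintro rfl
        exact absurd hp.2 (not_le.2 hm)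
      have : G p ≠ 0 := fun h => hp0 ((A.G0 p hp.1).1 h)
      positivity
  obtain ⟨δ, hδ, hb⟩ := hδ
  refine ⟨|H 1 - m| / δ + 1, by positivity, fun w hw t ht => ?_⟩
  have ht0 : 0 ≤ t := le_trans (by positivity) ht
  by_contra hcon
  push Not at hcon
  have h1 := A.decay hw ht0 (c := δ) (fun s hs =>
    hb _ (A.φm w hw s hs.1) (hcon.trans (A.anti hw hs.1 hs.2)))
  have h2 := A.max hw
  have h3 : |H 1 - m| + δ ≤ δ * t := by
    calc |H 1 - m| + δ = δ * (|H 1 - m| / δ + 1) := by field_simp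
      _ ≤ _ := by gcongr
  linarith [le_abs_self (H 1 - m)]

theorem attract0 (A : AuxGrad G H φ) {ε : ℝ} (hε : 0 < ε) :
    ∃ T, 0 ≤ T ∧ ∀ w ∈ closedBall (0:ℂ) 1, ∀ t, T ≤ t → ‖φ t w‖ < ε := by
  have hK : IsCompact (closedBall (0:ℂ) 1 ∩ {w | ε ≤ ‖w‖}) :=
    (isCompact_closedBall (0:ℂ) 1).inter_right (isClosed_le continuous_const continuous_norm)
  have hm : ∃ m, H 0 < m ∧ ∀ w ∈ closedBall (0:ℂ) 1, ε ≤ ‖w‖ → m ≤ H w := by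
    rcases (closedBall (0:ℂ) 1 ∩ {w | ε ≤ ‖w‖}).eq_empty_or_nonempty with h | h
    · refine ⟨H 0 + 1, by linarith, fun w hw hw' => ?_⟩
      have : w ∈ closedBall (0:ℂ) 1 ∩ {w | ε ≤ ‖w‖} := ⟨hw, hw'⟩
      rw [h] at this
      exact this.elim
    · obtain ⟨p, hp, hmin⟩ := hK.exists_isMinOn h (A.Hc.mono inter_subset_left)
      refine ⟨H p, A.min hp.1 ?_, fun w hw hw' => hmin ⟨hw, hw'⟩⟩
      rintro rfl
      have := hp.2
      simp only [mem_ofPred_eq, norm_zero] at this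
      linarith
  obtain ⟨m, hm0, hm⟩ := hm
  obtain ⟨T, hT, h⟩ := A.attract hm0
  refine ⟨T, hT, fun w hw t ht => ?_⟩
  by_contra hcon
  push Not at hcon
  have h1 := hm _ (A.φm w hw t (hT.trans ht)) hcon
  linarith [h w hw t ht]

end AuxGrad


namespace AuxGrad

variable {G : ℂ → ℂ} {H : ℂ → ℝ} {φ : ℝ → ℂ → ℂ}

theorem Hct (A : AuxGrad G H φ) {p : ℂ} (hp : p ∈ closedBall (0:ℂ) 1) :
    ContinuousOn (fun t => H (φ t p)) (Ici 0) :=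
  A.Hc.comp (A.φct p).continuousOn (fun t ht => A.φm p hp t ht)

theorem level_conn (A : AuxGrad G H φ) {h : ℝ} (h0 : H 0 < h) (h1 : h ≤ H 1) :
    IsPreconnected {w | w ∈ closedBall (0:ℂ) 1 ∧ H w = h} := by
  obtain ⟨T, hT, hat⟩ := A.attract h0
  have hS : ∀ p ∈ sphere (0:ℂ) 1, p ∈ closedBall (0:ℂ) 1 := fun p hp => sphere_subset_closedBall hp
  have hne : ∀ p ∈ sphere (0:ℂ) 1, p ≠ 0 := by rintro p hp rfl; simp at hp
  have ex : ∀ p : ℂ, ∃ t : ℝ, p ∈ sphere (0:ℂ) 1 → 0 ≤ t ∧ H (φ t p) = h := by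
    intro p
    by_cases hp : p ∈ sphere (0:ℂ) 1
    · have := intermediate_value_Icc' hT ((A.Hct (hS p hp)).mono Icc_subset_Ici_self)
      have hm : h ∈ Icc (H (φ T p)) (H (φ 0 p)) :=
        ⟨(hat p (hS p hp) T le_rfl).le, by rw [A.φ0, A.sphere_const hp]; exact h1⟩
      obtain ⟨t, ht, hth⟩ := this hm
      exact ⟨t, fun _ => ⟨ht.1, hth⟩⟩
    · exact ⟨0, fun h => absurd h hp⟩
  choose τ hτ using ex
  have hcq : ∀ a, 0 ≤ a → ∀ p ∈ sphere (0:ℂ) 1,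
      ContinuousWithinAt (fun q => H (φ a q)) (sphere (0:ℂ) 1) p := by
    intro a ha p hp
    exact (A.Hc.comp (A.φcz a).continuousOn (fun q hq => A.φm q (hS q hq) a ha)) p hp
  have hτc : ContinuousOn τ (sphere (0:ℂ) 1) := by
    intro p hp
    rw [ContinuousWithinAt, tendsto_order]
    constructor
    · intro a ha
      rcases lt_or_ge a 0 with ha0 | ha0
      · filter_upwards [self_mem_nhdsWithin] with q hq
        linarith [(hτ q hq).1]
      · have hlt : h < H (φ a p) := by
          have := A.strict (hS p hp) (hne p hp) ha0 ha
          rwa [(hτ p hp).2] at this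
        filter_upwards [(hcq a ha0 p hp).eventually (lt_mem_nhds hlt), self_mem_nhdsWithin]
          with q hq hqS
        by_contra hcon
        push Not at hcon
        have := A.anti (hS q hqS) (hτ q hqS).1 hcon
        rw [(hτ q hqS).2] at this
        linarith
    · intro a ha
      have ha0 : 0 ≤ a := (hτ p hp).1.trans ha.le
      have hlt : H (φ a p) < h := by
        have := A.strict (hS p hp) (hne p hp) (hτ p hp).1 ha
        rwa [(hτ p hp).2] at this
      filter_upwards [(hcq a ha0 p hp).eventually (gt_mem_nhds hlt), self_mem_nhdsWithin]
        with q hq hqS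
      by_contra hcon
      push Not at hcon
      have := A.anti (hS q hqS) ha0 hcon
      rw [(hτ q hqS).2] at this
      linarith
  have hgc : ContinuousOn (fun p => φ (τ p) p) (sphere (0:ℂ) 1) :=
    A.φc.comp_continuousOn (hτc.prodMk continuousOn_id)
  convert aux_sphere.image _ hgc using 1
  ext w
  constructor
  · rintro ⟨hw, hwh⟩
    have hw0 : w ≠ 0 := by rintro rfl; linarith
    have hout : 1 < ‖φ (-T) w‖ := by
      by_contra hcon
      push Not at hcon
      have := hat (φ (-T) w) (by simpa using hcon) T le_rfl
      rw [← A.φg, add_neg_cancel, A.φ0] at this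
      linarith
    have hcn : ContinuousOn (fun s => ‖φ (-s) w‖) (Icc 0 T) :=
      (((A.φct w).comp continuous_neg).norm).continuousOn
    obtain ⟨s, hs, hs1⟩ := intermediate_value_Icc hT hcn
      (show (1:ℝ) ∈ _ from ⟨by simpa [A.φ0] using hw, hout.le⟩)
    have hsS : φ (-s) w ∈ sphere (0:ℂ) 1 := by simpa using hs1
    have hback : φ s (φ (-s) w) = w := by rw [← A.φg, add_neg_cancel, A.φ0]
    refine ⟨φ (-s) w, hsS, ?_⟩
    have : τ (φ (-s) w) = s := by
      have ht := hτ _ hsS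
      rcases lt_trichotomy (τ (φ (-s) w)) s with hl | hl | hl
      · have := A.strict (hS _ hsS) (hne _ hsS) ht.1 hl
        rw [hback, ht.2, hwh] at this
        exact absurd this (lt_irrefl _)
      · exact hl
      · have := A.strict (hS _ hsS) (hne _ hsS) hs.1 hl
        rw [hback, ht.2, hwh] at this
        exact absurd this (lt_irrefl _)
    simp only [this, hback]
  · rintro ⟨p, hp, rfl⟩
    exact ⟨A.φm p (hS p hp) _ (hτ p hp).1, (hτ p hp).2⟩

theorem sub_open (A : AuxGrad G H φ) {h : ℝ} (h1 : h ≤ H 1) :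
    IsOpen {w | w ∈ closedBall (0:ℂ) 1 ∧ H w < h} := by
  have : {w | w ∈ closedBall (0:ℂ) 1 ∧ H w < h} = ball (0:ℂ) 1 ∩ H ⁻¹' Iio h := by
    ext w
    constructor
    · rintro ⟨hw, hwh⟩
      refine ⟨?_, hwh⟩
      by_contra hcon
      have hS : w ∈ sphere (0:ℂ) 1 := by
        rw [mem_ball_zero_iff] at hcon; rw [mem_closedBall_zero_iff] at hw
        rw [mem_sphere_zero_iff_norm]; linarith
      rw [A.sphere_const hS] at hwh
      linarith
    · rintro ⟨hw, hwh⟩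
      exact ⟨ball_subset_closedBall hw, hwh⟩
  rw [this]
  exact (A.Hc.mono ball_subset_closedBall).isOpen_inter_preimage isOpen_ball isOpen_Iio

theorem sub_frontier (A : AuxGrad G H φ) {h : ℝ} (h0 : H 0 < h) (h1 : h ≤ H 1) :
    frontier {w | w ∈ closedBall (0:ℂ) 1 ∧ H w < h} = {w | w ∈ closedBall (0:ℂ) 1 ∧ H w = h} := by
  rw [(A.sub_open h1).frontier_eq]
  ext w
  constructor
  · rintro ⟨hw, hw'⟩
    have hcl : IsClosed (closedBall (0:ℂ) 1 ∩ H ⁻¹' Iic h) :=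
      A.Hc.preimage_isClosed_of_isClosed isClosed_closedBall isClosed_Iic
    have := closure_minimal (fun x (hx : x ∈ {w | w ∈ closedBall (0:ℂ) 1 ∧ H w < h}) =>
      (⟨hx.1, hx.2.le⟩ : x ∈ closedBall (0:ℂ) 1 ∩ H ⁻¹' Iic h)) hcl hw
    refine ⟨this.1, le_antisymm this.2 ?_⟩
    by_contra hcon
    exact hw' ⟨this.1, not_le.1 hcon⟩
  · rintro ⟨hw, hwh⟩
    have hw0 : w ≠ 0 := by rintro rfl; linarith
    refine ⟨?_, fun hc => absurd hc.2 (by rw [hwh]; exact lt_irrefl _)⟩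
    have ht : Filter.Tendsto (fun t => φ t w) (nhdsWithin 0 (Ioi 0)) (nhds w) := by
      have := ((A.φct w).tendsto 0).mono_left (nhdsWithin_le_nhds (s := Ioi 0))
      rwa [A.φ0] at this
    refine mem_closure_of_tendsto ht ?_
    filter_upwards [self_mem_nhdsWithin] with t ht
    exact ⟨A.φm w hw t (le_of_lt ht), hwh ▸ A.lt_of_pos hw hw0 ht⟩

theorem sub_simply (A : AuxGrad G H φ) {h : ℝ} (h0 : H 0 < h) :
    SimplyConnectedSpace ↥{w | w ∈ closedBall (0:ℂ) 1 ∧ H w < h} := by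
  set U := {w | w ∈ closedBall (0:ℂ) 1 ∧ H w < h} with hU
  have h0U : (0:ℂ) ∈ U := ⟨by simp, h0⟩
  let f : unitInterval × U → ℂ := fun p =>
    if (p.1:ℝ) = 1 then 0 else φ ((p.1:ℝ) / (1 - p.1)) p.2
  have hnn : ∀ s : unitInterval, 0 ≤ (s:ℝ) / (1 - s) := fun s =>
    div_nonneg s.2.1 (by linarith [s.2.2])
  have hfU : ∀ p, f p ∈ U := by
    rintro ⟨s, w⟩
    by_cases hs : (s:ℝ) = 1
    · simp only [f, if_pos hs]; exact h0U
    · simp only [f, if_neg hs]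
      refine ⟨A.φm w w.2.1 _ (hnn s), ?_⟩
      have := A.anti w.2.1 le_rfl (hnn s)
      rw [A.φ0] at this
      exact this.trans_lt w.2.2
  have hfc : Continuous f := by
    rw [continuous_iff_continuousAt]
    rintro ⟨s, w⟩
    by_cases hs : (s:ℝ) = 1
    · rw [ContinuousAt, Metric.tendsto_nhds]
      intro ε hε
      obtain ⟨T, hT, hat⟩ := A.attract0 hε
      have hlt : T / (1 + T) < s := by rw [hs, div_lt_one (by linarith)]; linarith
      have hcs : Continuous (fun p : unitInterval × U => (p.1:ℝ)) :=
        continuous_subtype_val.comp continuous_fst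
      filter_upwards [hcs.continuousAt.eventually (lt_mem_nhds hlt)] with p hp
      have e : f (s, w) = 0 := by simp only [f, if_pos hs]
      rw [e, dist_zero_right]
      by_cases hp1 : (p.1:ℝ) = 1
      · simp only [f, if_pos hp1, norm_zero]; exact hε
      · simp only [f, if_neg hp1]
        apply hat _ p.2.2.1
        have hp2 : 0 < 1 - (p.1:ℝ) := by
          have := lt_of_le_of_ne p.1.2.2 hp1
          linarith
        rw [div_lt_iff₀ (by linarith)] at hp
        rw [le_div_iff₀ hp2]
        linarith
    · have hcs : Continuous (fun p : unitInterval × U => (p.1:ℝ)) :=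
        continuous_subtype_val.comp continuous_fst
      have hcw : Continuous (fun p : unitInterval × U => (p.2:ℂ)) :=
        continuous_subtype_val.comp continuous_snd
      have h1 : ContinuousAt (fun p : unitInterval × U => φ ((p.1:ℝ) / (1 - p.1)) p.2) (s, w) := by
        refine (A.φc.continuousAt).comp (f := fun p : unitInterval × U => ((p.1:ℝ) / (1 - p.1), (p.2:ℂ))) ?_
        refine ContinuousAt.prodMk ?_ hcw.continuousAt
        exact hcs.continuousAt.div (continuousAt_const.sub hcs.continuousAt) (sub_ne_zero.2 (Ne.symm hs))
      refine h1.congr ?_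
      filter_upwards [hcs.continuousAt.eventually (isOpen_ne.mem_nhds hs)] with p hp
      exact (if_neg hp).symm
  have hcon : ContractibleSpace U := by
    rw [contractible_iff_id_nullhomotopic]
    refine ⟨⟨0, h0U⟩, ⟨⟨⟨fun p => ⟨f p, hfU p⟩, hfc.subtype_mk _⟩, ?_, ?_⟩⟩⟩
    · intro w
      apply Subtype.ext
      simp [f, A.φ0]
    · intro w
      apply Subtype.ext
      simp [f]
  exact SimplyConnectedSpace.ofContractible U

end AuxGrad


/-- The Hamiltonian flow `ψ` attached to the Lyapunov data. -/
structure AuxHam (G : ℂ → ℂ) (H : ℂ → ℝ) (φ : ℝ → ℂ → ℂ) (W : ℂ → ℂ) (ψ : ℝ → ℂ → ℂ) : Prop where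
  A : AuxGrad G H φ
  WG : ∃ c : ℝ, c ≠ 0 ∧ ∀ z, W z = c * (Complex.I * G z)
  ψ0 : ∀ z, ψ 0 z = z
  ψd : ∀ z ∈ closedBall (0:ℂ) 1, ∀ t, HasDerivAt (fun s => ψ s z) (W (ψ t z)) t
  ψg : ∀ s t z, ψ (s + t) z = ψ s (ψ t z)
  ψm : ∀ z ∈ closedBall (0:ℂ) 1, ∀ t, ψ t z ∈ closedBall (0:ℂ) 1

namespace AuxHam

variable {G : ℂ → ℂ} {H : ℂ → ℝ} {φ : ℝ → ℂ → ℂ} {W : ℂ → ℂ} {ψ : ℝ → ℂ → ℂ}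

theorem cons (B : AuxHam G H φ W ψ) {z : ℂ} (hz : z ∈ closedBall (0:ℂ) 1) (t : ℝ) :
    H (ψ t z) = H z := by
  obtain ⟨c, hc, hWG⟩ := B.WG
  have hd : ∀ t : ℝ, HasDerivAt (fun t : ℝ => H (ψ t z)) 0 t := by
    intro t
    have h2 := (B.A.Hd _ (B.ψm z hz t)).comp_hasDerivWithinAt t
      ((B.ψd z hz t).hasDerivWithinAt (s := univ)) (fun s _ => B.ψm z hz s)
    rw [hasDerivWithinAt_univ] at h2
    have h3 : inner ℝ (G (ψ t z)) (W (ψ t z)) = 0 := by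
      rw [hWG, Complex.inner]
      simp
      ring
    simpa [Function.comp_def, h3] using h2
  have := is_const_of_deriv_eq_zero (fun θ => (hd θ).differentiableAt) (fun θ => (hd θ).deriv) t 0
  simpa [B.ψ0] using this

theorem inj (B : AuxHam G H φ W ψ) {p : ℂ} (hp : p ∈ closedBall (0:ℂ) 1) (hp0 : p ≠ 0) :
    ∃ r > 0, ∀ a ∈ closedBall (0:ℂ) 1 ∩ ball p r, ∀ b ∈ closedBall (0:ℂ) 1 ∩ ball p r,
      H a = H b → inner ℝ (W p) (a - p) = inner ℝ (W p) (b - p) → a = b := by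
  obtain ⟨c, hc, hWG⟩ := B.WG
  have hG : G p ≠ 0 := fun h => hp0 ((B.A.G0 p hp).1 h)
  have hGn : 0 < ‖G p‖ := norm_pos_iff.2 hG
  obtain ⟨r, hr, hrb⟩ := Metric.continuousOn_iff.1 B.A.Gc p hp (‖G p‖ / 2) (by linarith)
  refine ⟨r, hr, fun a ha b hb hab hf => ?_⟩
  have hconv : Convex ℝ (closedBall (0:ℂ) 1 ∩ ball p r) :=
    (convex_closedBall _ _).inter (convex_ball _ _)
  have h1 := hconv.norm_image_sub_le_of_norm_hasFDerivWithin_le' (f := H)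
    (f' := fun w => innerSL ℝ (G w)) (φ := innerSL ℝ (G p)) (C := ‖G p‖ / 2)
    (fun w hw => (B.A.Hd w hw.1).mono inter_subset_left)
    (fun w hw => by
      rw [← map_sub, innerSL_apply_norm, ← dist_eq_norm]
      exact (hrb w hw.1 hw.2).le) hb ha
  rw [hab, sub_self, zero_sub, norm_neg, innerSL_apply_apply, Real.norm_eq_abs] at h1
  have h2 : inner ℝ (Complex.I * G p) (a - b) = 0 := by
    rw [hWG] at hf
    have h3 : inner ℝ (c * (Complex.I * G p)) (a - b) = 0 := by
      rw [show a - b = (a - p) - (b - p) by ring, inner_sub_right, hf, sub_self]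
    rw [← Complex.real_smul, real_inner_smul_left] at h3
    exact (mul_eq_zero.1 h3).resolve_left hc
  have h3 : (inner ℝ (G p) (a - b))^2 + (inner ℝ (Complex.I * G p) (a - b))^2
      = ‖G p‖^2 * ‖a - b‖^2 := by
    rw [Complex.sq_norm, Complex.sq_norm, Complex.normSq_apply, Complex.normSq_apply,
      Complex.inner, Complex.inner]
    simp
    ring
  rw [h2] at h3
  have h4 : |inner ℝ (G p) (a - b)| = ‖G p‖ * ‖a - b‖ := by
    have : (inner ℝ (G p) (a - b))^2 = (‖G p‖ * ‖a - b‖)^2 := by linarith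
    have := (sq_eq_sq_iff_abs_eq_abs _ _).1 this
    rwa [abs_of_nonneg (a := ‖G p‖ * ‖a - b‖) (by positivity)] at this
  rw [h4] at h1
  have h5 : ‖a - b‖ = 0 := by
    by_contra hne
    have : 0 < ‖a - b‖ := lt_of_le_of_ne (norm_nonneg _) (Ne.symm hne)
    nlinarith [mul_pos hGn this]
  exact sub_eq_zero.1 (norm_eq_zero.1 h5)

theorem local_orbit (B : AuxHam G H φ W ψ) {p : ℂ} (hp : p ∈ closedBall (0:ℂ) 1) (hp0 : p ≠ 0) :
    ∀ᶠ w in nhds p, w ∈ closedBall (0:ℂ) 1 → H w = H p → ∃ t, |t| < 1/4 ∧ ψ t p = w := by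
  obtain ⟨r, hr, hinj⟩ := B.inj hp hp0
  have hWp : W p ≠ 0 := by
    obtain ⟨c, hc, hWG⟩ := B.WG
    have hG : G p ≠ 0 := fun h => hp0 ((B.A.G0 p hp).1 h)
    rw [hWG]
    simp [hc, hG]
  set g : ℝ → ℝ := fun t => inner ℝ (W p) (ψ t p - p) with hg
  have hg0 : g 0 = 0 := by simp [hg, B.ψ0]
  have hcψ : Continuous (fun t => ψ t p) :=
    continuous_iff_continuousAt.2 fun t => (B.ψd p hp t).continuousAt
  have hgc : Continuous g := by
    simp only [hg]; fun_prop
  have hgd : HasDerivAt g (‖W p‖^2) 0 := by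
    have h1 := (B.ψd p hp 0).sub_const p
    rw [B.ψ0] at h1
    have h2 := (innerSL ℝ (W p)).hasFDerivAt.comp_hasDerivAt (0:ℝ) h1
    simpa [Function.comp_def, hg] using h2
  have hsl := hasDerivAt_iff_tendsto_slope.1 hgd
  have hpos : 0 < ‖W p‖^2 := by positivity
  have hev1 := hsl.eventually (lt_mem_nhds hpos)
  rw [eventually_nhdsWithin_iff, Metric.eventually_nhds_iff] at hev1
  obtain ⟨δ, hδ, h1⟩ := hev1
  have hev2 : ∀ᶠ t in nhds (0:ℝ), ψ t p ∈ ball p r := by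
    refine hcψ.continuousAt.eventually (isOpen_ball.mem_nhds ?_)
    simpa [B.ψ0] using hr
  rw [Metric.eventually_nhds_iff] at hev2
  obtain ⟨δ', hδ', h2⟩ := hev2
  obtain ⟨t₁, ht₁, hlt⟩ : ∃ t₁ : ℝ, 0 < t₁ ∧ t₁ < δ ∧ t₁ < δ' ∧ t₁ < 1/4 := by
    obtain ⟨t, ht, h⟩ := exists_between (show (0:ℝ) < Min.min δ (Min.min δ' (1/4)) by positivity)
    simp only [lt_min_iff] at h
    exact ⟨t, ht, h⟩
  have hgp : 0 < g t₁ := by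
    have := h1 (y := t₁) (by simpa [abs_of_pos ht₁] using hlt.1) (by simpa using ht₁.ne')
    rw [slope_def_field, hg0, sub_zero, sub_zero] at this
    exact (div_pos_iff_of_pos_right ht₁).1 this
  have hgn : g (-t₁) < 0 := by
    have := h1 (y := -t₁) (by simpa [abs_of_pos ht₁] using hlt.1) (by simpa using ht₁.ne')
    rw [slope_def_field, hg0, sub_zero, sub_zero, div_neg, ← neg_div] at this
    linarith [(div_pos_iff_of_pos_right ht₁).1 this]
  have hfc : Continuous (fun w => inner ℝ (W p) (w - p)) := by fun_prop
  have e1 : ∀ᶠ w in nhds p, g (-t₁) < inner ℝ (W p) (w - p) :=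
    hfc.continuousAt.eventually (lt_mem_nhds (by simpa using hgn))
  have e2 : ∀ᶠ w in nhds p, inner ℝ (W p) (w - p) < g t₁ :=
    hfc.continuousAt.eventually (gt_mem_nhds (by simpa using hgp))
  filter_upwards [e1, e2, ball_mem_nhds p hr] with w hw1 hw2 hwr hwD hwH
  obtain ⟨t, ht, hgt⟩ := intermediate_value_Icc (by linarith : -t₁ ≤ t₁) hgc.continuousOn
    (show inner ℝ (W p) (w - p) ∈ _ from ⟨hw1.le, hw2.le⟩)
  have hta : |t| ≤ t₁ := abs_le.2 ht
  refine ⟨t, by linarith, ?_⟩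
  refine hinj _ ⟨B.ψm p hp t, h2 ?_⟩ _ ⟨hwD, hwr⟩ ?_ hgt
  · simpa using hta.trans_lt hlt.2.1
  · rw [B.cons hp, hwH]

theorem orbit_eq (B : AuxHam G H φ W ψ) {z : ℂ} (hz : z ∈ closedBall (0:ℂ) 1) (hz0 : z ≠ 0) :
    {w | w ∈ closedBall (0:ℂ) 1 ∧ H w = H z} = {w : ℂ | ∃ t : ℝ, ψ t z = w} := by
  ext w
  constructor
  · intro hw
    refine (B.A.level_conn (B.A.min hz hz0) (B.A.max hz)).induction₂ (fun x y => ∃ t : ℝ, ψ t x = y)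
      ?_ ?_ ?_ (show z ∈ _ from ⟨hz, rfl⟩) hw
    · intro x hx
      have hx0 : x ≠ 0 := by
        rintro rfl
        have := B.A.min hz hz0
        rw [hx.2] at this
        exact lt_irrefl _ this
      filter_upwards [nhdsWithin_le_nhds (B.local_orbit hx.1 hx0), self_mem_nhdsWithin] with y hy hyL
      obtain ⟨t, -, ht⟩ := hy hyL.1 (hyL.2.trans hx.2.symm)
      exact ⟨t, ht⟩
    · rintro a b c - - - ⟨s, rfl⟩ ⟨t, rfl⟩
      exact ⟨t + s, B.ψg _ _ _⟩
    · rintro a b - - ⟨s, rfl⟩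
      exact ⟨-s, by rw [← B.ψg, neg_add_cancel, B.ψ0]⟩
  · rintro ⟨t, rfl⟩
    exact ⟨B.ψm z hz t, B.cons hz t⟩

theorem periodic (B : AuxHam G H φ W ψ) {z : ℂ} (hz : z ∈ closedBall (0:ℂ) 1) (hz0 : z ≠ 0) :
    ∃ T : ℝ, 0 < T ∧ ∀ t : ℝ, ψ (t + T) z = ψ t z := by
  obtain ⟨p, hp, θ, hθ, hlim⟩ := (isCompact_closedBall (0:ℂ) 1).tendsto_subseq
    (x := fun n : ℕ => ψ n z) (fun n => B.ψm z hz n)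
  have hHp : H p = H z := by
    have h1 : Filter.Tendsto ((fun n : ℕ => ψ n z) ∘ θ) Filter.atTop (nhdsWithin p (closedBall 0 1)) :=
      tendsto_nhdsWithin_iff.2 ⟨hlim, Filter.Eventually.of_forall fun n => B.ψm z hz _⟩
    have h2 := (B.A.Hc p hp).tendsto.comp h1
    refine tendsto_nhds_unique h2 (tendsto_const_nhds.congr fun n => ?_)
    exact (B.cons hz _).symm
  have hp0 : p ≠ 0 := by
    rintro rfl
    have := B.A.min hz hz0
    rw [hHp] at this
    exact lt_irrefl _ this
  obtain ⟨N, hN⟩ := Filter.eventually_atTop.1 (hlim.eventually (B.local_orbit hp hp0))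
  obtain ⟨s, hs, hs'⟩ := hN N le_rfl (B.ψm z hz _) ((B.cons hz _).trans hHp.symm)
  obtain ⟨u, hu, hu'⟩ := hN (N+1) (Nat.le_succ N) (B.ψm z hz _) ((B.cons hz _).trans hHp.symm)
  simp only [Function.comp] at hs' hu'
  have e1 : ψ (-s + θ N) z = p := by rw [B.ψg, ← hs', ← B.ψg, neg_add_cancel, B.ψ0]
  have e2 : ψ (-u + θ (N+1)) z = p := by rw [B.ψg, ← hu', ← B.ψg, neg_add_cancel, B.ψ0]
  have hlt : (θ N : ℝ) + 1 ≤ θ (N+1) := by exact_mod_cast hθ (Nat.lt_succ_self N)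
  have := abs_lt.1 hs
  have := abs_lt.1 hu
  refine ⟨(-u + θ (N+1)) - (-s + θ N), by linarith, fun t => ?_⟩
  rw [show t + ((-u + (θ (N+1):ℝ)) - (-s + θ N)) = (t - (-s + θ N)) + (-u + θ (N+1)) by ring,
    B.ψg, e2, ← e1, ← B.ψg, sub_add_cancel]

theorem symm (B : AuxHam G H φ W ψ) (L : ℂ →L[ℝ] ℂ)
    (hLi : ∀ a b, inner ℝ (L a) (L b) = inner ℝ a b)
    (hGL : ∀ z ∈ closedBall (0:ℂ) 1, G (L z) = L (G z)) (hψ : ∀ t, ψ t 0 = 0)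
    {z : ℂ} (hz : z ∈ closedBall (0:ℂ) 1) (t : ℝ) : ∃ s : ℝ, ψ s z = L (ψ t z) := by
  rcases eq_or_ne z 0 with rfl | hz0
  · exact ⟨0, by simp [hψ]⟩
  have hLn : ∀ a, ‖L a‖ = ‖a‖ := by
    intro a
    rw [← sq_eq_sq₀ (norm_nonneg _) (norm_nonneg _), ← real_inner_self_eq_norm_sq,
      ← real_inner_self_eq_norm_sq, hLi]
  have hLD : MapsTo L (closedBall (0:ℂ) 1) (closedBall (0:ℂ) 1) := by
    intro a ha
    rw [mem_closedBall_zero_iff] at ha ⊢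
    rwa [hLn]
  have hdL : ∀ w ∈ closedBall (0:ℂ) 1,
      HasFDerivWithinAt (fun w => H (L w)) (innerSL ℝ (G w)) (closedBall 0 1) w := by
    intro w hw
    have h1 := (B.A.Hd (L w) (hLD hw)).comp w L.hasFDerivWithinAt hLD
    have e : (innerSL ℝ (G (L w))).comp L = innerSL ℝ (G w) :=
      ContinuousLinearMap.ext fun v => by
        change inner ℝ (G (L w)) (L v) = inner ℝ (G w) v
        rw [hGL w hw, hLi]
    rw [← e]
    exact h1
  have hHL : EqOn (fun w => H (L w)) H (closedBall (0:ℂ) 1) := by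
    refine (convex_closedBall (0:ℂ) 1).eqOn_of_fderivWithin_eq (𝕜 := ℝ) (x := 0)
      (fun w hw => (hdL w hw).differentiableWithinAt)
      (fun w hw => (B.A.Hd w hw).differentiableWithinAt) aux_unique ?_ (by simp) (by simp)
    intro w hw
    rw [(hdL w hw).fderivWithin (aux_unique w hw), (B.A.Hd w hw).fderivWithin (aux_unique w hw)]
  have : L (ψ t z) ∈ {w | w ∈ closedBall (0:ℂ) 1 ∧ H w = H z} :=
    ⟨hLD (B.ψm z hz t), (hHL (B.ψm z hz t)).trans (B.cons hz t)⟩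
  rw [B.orbit_eq hz hz0] at this
  exact this

end AuxHam


/-- for a `C¹`, divergence-free vector field on the closed unit disc, tangent to
the unit circle and vanishing only at the origin, all trajectories of the associated flow are
global and periodic, enclose a simply connected region containing the origin, the flow maps
form a one-parameter group of diffeomorphisms of the closed disc, and the orbits inherit the
reflection and rotation symmetries of the vector field. -/
theorem hamiltonian_disc_flow (W : ℂ → ℂ)
    (hW : ContDiffOn ℝ 1 W (closedBall 0 1))
    (hdiv : ∀ z ∈ closedBall (0:ℂ) 1,
      (fderiv ℝ W z 1).re + (fderiv ℝ W z Complex.I).im = 0)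
    (htan : ∀ z ∈ sphere (0:ℂ) 1, (W z * (starRingEnd ℂ) z).re = 0)
    (hzero : ∀ z ∈ closedBall (0:ℂ) 1, (W z = 0 ↔ z = 0)) :
    ∃ ψ : ℝ → ℂ → ℂ,
      -- ψ is the (globally defined) flow of W on the closed disc
      (∀ z ∈ closedBall (0:ℂ) 1, ψ 0 z = z) ∧
      (∀ z ∈ closedBall (0:ℂ) 1, ∀ t : ℝ,
        ψ t z ∈ closedBall (0:ℂ) 1 ∧ HasDerivAt (fun s : ℝ => ψ s z) (W (ψ t z)) t) ∧
      -- (1) every trajectory off the origin is periodic and its orbit is the boundary of a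
      -- simply connected open region containing the origin
      (∀ z ∈ closedBall (0:ℂ) 1, z ≠ 0 →
        ∃ T : ℝ, 0 < T ∧ (∀ t : ℝ, ψ (t + T) z = ψ t z) ∧
          ∃ U : Set ℂ, IsOpen U ∧ (0:ℂ) ∈ U ∧ U ⊆ closedBall 0 1 ∧
            SimplyConnectedSpace ↥U ∧ frontier U = {w : ℂ | ∃ t : ℝ, ψ t z = w}) ∧
      -- (2) the maps ψ t form a one-parameter group of diffeomorphisms of the closed disc
      (∀ t : ℝ, BijOn (ψ t) (closedBall 0 1) (closedBall 0 1) ∧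
        ContDiffOn ℝ 1 (ψ t) (closedBall 0 1)) ∧
      (∀ s t : ℝ, ∀ z ∈ closedBall (0:ℂ) 1, ψ (s + t) z = ψ s (ψ t z)) ∧
      -- (3) antisymmetric W: orbits are symmetric with respect to the real axis
      ((∀ z ∈ closedBall (0:ℂ) 1, (starRingEnd ℂ) (W z) = -W ((starRingEnd ℂ) z)) →
        ∀ z ∈ closedBall (0:ℂ) 1, ∀ t : ℝ, ∃ s : ℝ, ψ s z = (starRingEnd ℂ) (ψ t z)) ∧
      -- (4) rotation-invariant W: orbits are invariant under the rotation
      (∀ θ₀ : ℝ,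
        (∀ z ∈ closedBall (0:ℂ) 1,
          W (Complex.exp (θ₀ * Complex.I) * z) = Complex.exp (θ₀ * Complex.I) * W z) →
        ∀ z ∈ closedBall (0:ℂ) 1, ∀ t : ℝ,
          ∃ s : ℝ, ψ s z = Complex.exp (θ₀ * Complex.I) * ψ t z) := by
  obtain ⟨σ, hσ, hσS⟩ := aux_sign W hW htan hzero
  obtain ⟨H₁, hH₁⟩ := aux_ham W hW hdiv
  set G : ℂ → ℂ := fun z => σ * (Complex.I * W z) with hG
  set H : ℂ → ℝ := fun z => σ * H₁ z with hH
  have hGC : ContDiffOn ℝ 1 G (closedBall 0 1) :=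
    contDiffOn_const.mul (contDiffOn_const.mul hW)
  have hW0 : W 0 = 0 := (hzero 0 (by simp)).2 rfl
  have hσC : (σ:ℂ) ≠ 0 := by exact_mod_cast hσ
  obtain ⟨φ, K, hφ0, hφd, hφg, hφc, -, hφm, -, hφz, -⟩ := aux_discflow (fun z => -G z) hGC.neg
    (fun z hz => by
      have := hσS z hz
      rw [neg_mul, Complex.neg_re]
      linarith)
  obtain ⟨ψ, K', hψ0, hψd, hψg, hψc, hψl, -, hψm, hψz, hψl'⟩ := aux_discflow W hW
    (fun z hz => (htan z hz).le)
  have hψm := hψm htan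
  have hψz := hψz hW0
  have A : AuxGrad G H φ :=
    { Gc := hGC.continuousOn
      Hd := fun z hz => by
        have h1 := (hH₁ z hz).const_mul σ
        have e : σ • innerSL ℝ (Complex.I * W z) = innerSL ℝ (G z) := by
          rw [← map_smul, Complex.real_smul]
        rw [← e]
        exact h1
      G0 := fun z hz => by
        simp only [hG, mul_eq_zero, hσC, Complex.I_ne_zero, false_or]
        exact hzero z hz
      Gt := fun z hz => by
        have h := htan z hz
        simp only [hG, Complex.inner]
        simp at h ⊢
        linear_combination σ * h
      φ0 := hφ0
      φd := fun z hz t ht => hφd z t (hφm z hz t ht)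
      φg := hφg
      φc := hφc
      φm := hφm
      φz := hφz (by simp [hG, hW0]) }
  have B : AuxHam G H φ W ψ :=
    { A := A
      WG := ⟨-σ⁻¹, by simpa using hσ, fun z => by
        simp only [hG]
        push_cast
        field_simp
        linear_combination (W z) * Complex.I_sq⟩
      ψ0 := hψ0
      ψd := fun z hz t => hψd z t (hψm z hz t)
      ψg := hψg
      ψm := hψm }
  refine ⟨ψ, fun z _ => hψ0 z, fun z hz t => ⟨hψm z hz t, B.ψd z hz t⟩, ?_, ?_,
    fun s t z _ => hψg s t z, ?_, ?_⟩
  · intro z hz hz0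
    obtain ⟨T, hT, hper⟩ := B.periodic hz hz0
    refine ⟨T, hT, hper, {w | w ∈ closedBall (0:ℂ) 1 ∧ H w < H z}, A.sub_open (A.max hz),
      ⟨by simp, A.min hz hz0⟩, fun w hw => hw.1, A.sub_simply (A.min hz hz0), ?_⟩
    rw [A.sub_frontier (A.min hz hz0) (A.max hz), B.orbit_eq hz hz0]
  · intro t
    have hinv : ∀ t z, ψ (-t) (ψ t z) = z := fun t z => by
      rw [← hψg, neg_add_cancel, hψ0]
    constructor
    · refine ⟨fun z hz => hψm z hz t, ?_, ?_⟩
      · intro a _ b _ hab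
        have := congrArg (ψ (-t)) hab
        rwa [hinv, hinv] at this
      · intro w hw
        exact ⟨ψ (-t) w, hψm w hw _, by simpa using hinv (-t) w⟩
    · rcases le_total 0 t with ht | ht
      · exact aux_C1 W hW ψ (fun z _ => hψ0 z) K' (fun z hz t _ => hψm z hz t)
          (fun z hz t _ => B.ψd z hz t) hψg hψl t ht
      · have := aux_C1 (fun z => -W z) hW.neg (fun s z => ψ (-s) z) (fun z _ => by simp [hψ0]) K'
          (fun z hz t _ => hψm z hz _)
          (fun z hz s _ => by
            simpa [Function.comp_def] using (B.ψd z hz (-s)).scomp s (hasDerivAt_neg s))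
          (fun s t z => by rw [← hψg, neg_add]) hψl' (-t) (by linarith)
        simpa using this
  · intro hsym z hz t
    refine B.symm (Complex.conjCLE : ℂ →L[ℝ] ℂ) ?_ ?_ hψz hz t
    · intro a b
      simp [Complex.inner]
    · intro w hw
      have h := hsym w hw
      have h' : W ((starRingEnd ℂ) w) = -(starRingEnd ℂ) (W w) := by rw [h, neg_neg]
      simp [hG, h']
  · intro θ₀ hrot z hz t
    refine B.symm (ContinuousLinearMap.mul ℝ ℂ (Complex.exp (θ₀ * Complex.I))) ?_ ?_ hψz hz t
    · intro a b
      have h1 : Complex.exp (θ₀ * Complex.I) * (starRingEnd ℂ) (Complex.exp (θ₀ * Complex.I)) = 1 := by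
        rw [Complex.mul_conj, Complex.normSq_eq_norm_sq, Complex.norm_exp_ofReal_mul_I]
        simp
      simp only [ContinuousLinearMap.mul_apply', Complex.inner, map_mul]
      congr 1
      linear_combination (b * (starRingEnd ℂ) a) * h1
    · intro w hw
      simp only [ContinuousLinearMap.mul_apply', hG, hrot w hw]
      ring
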